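/- (Lemma 8, part (i).) Let D, k, m_h be positive integers with k ≥ 2 and m_h > D, and set C = k·D. Then the sufficient length equals the counting length: m_v^S(C,D,m_h) = m_v^C(C,D,m_h) = D·⌈(m_h − D)/(C − D)⌉. -/

import Mathlib

open Finset

noncomputable section

/-- The `p`-th polyphase length `⌈(m - p)/D⌉`. -/
def polyLen (D m p : ℕ) : ℤ := ⌈((m : ℚ) - (p : ℚ)) / (D : ℚ)⌉

/-- The sufficient-length condition. -/
def SuffLenCond (C D mh mv : ℕ) : Prop :=
  1 ≤ mv / D ∧
    ∑ p ∈ Finset.range D, ⌈((polyLen D mh p : ℚ) - 1) / ((mv / D : ℕ) : ℚ)⌉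
      ≤ (C : ℤ) - (D : ℤ)

/-- The sufficient length `m_v^S(C,D,m_h)`. -/
def mvS (C D mh : ℕ) : ℕ := sInf {mv : ℕ | SuffLenCond C D mh mv}

/-- The counting length `m_v^C(C,D,m_h) = D·⌈(m_h - D)/(C - D)⌉`. -/
def mvC (C D mh : ℕ) : ℤ := (D : ℤ) * ⌈((mh : ℚ) - (D : ℚ)) / ((C : ℚ) - (D : ℚ))⌉

/-!
The polyphase lengths of `m_h` add up to `m_h`, so dropping the outer ceilings in the
sufficient-length condition leaves `m_h - D ≤ (C - D)⌊m_v/D⌋`: no sufficient `m_v` is below the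
counting length. When `C = k·D`, the budget `C - D` splits into `k - 1` for each of the `D`
summands. The counting length `D·N` satisfies `m_h ≤ D·((k - 1)·N + 1)`, so every polyphase length
is at most `(k - 1)·N + 1` and every summand stays within its share.
-/

theorem polyLen_succ_succ (D m p : ℕ) : polyLen D (m + 1) (p + 1) = polyLen D m p := by
  simp only [polyLen, Nat.cast_add_one, add_sub_add_right_eq_sub]

theorem polyLen_self {D : ℕ} (hD : 0 < D) (m : ℕ) : polyLen D m D = polyLen D m 0 - 1 := by
  have hD' : (D : ℚ) ≠ 0 := by exact_mod_cast hD.ne'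
  simp only [polyLen, sub_div, div_self hD', Int.ceil_sub_one, Nat.cast_zero, sub_zero]

theorem polyLen_le_iff {D m p : ℕ} {a : ℤ} (hD : 0 < D) :
    polyLen D m p ≤ a ↔ (m : ℤ) - p ≤ a * D := by
  rw [polyLen, Int.ceil_le, div_le_iff₀ (by exact_mod_cast hD)]
  norm_cast

theorem polyLen_zero_of_lt {D p : ℕ} (hp : p < D) : polyLen D 0 p = 0 := by
  have hD : 0 < D := p.zero_le.trans_lt hp
  refine le_antisymm ((polyLen_le_iff hD).2 (by simp)) (not_lt.1 fun hneg => ?_)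
  have := (polyLen_le_iff hD).1 (Int.le_sub_one_of_lt hneg)
  omega

theorem sum_polyLen {D : ℕ} (hD : 0 < D) (m : ℕ) : ∑ p ∈ range D, polyLen D m p = m := by
  induction m with
  | zero => exact sum_eq_zero fun p hp => polyLen_zero_of_lt (mem_range.1 hp)
  | succ m ih =>
    have shift : ∑ p ∈ range D, polyLen D (m + 1) p + polyLen D (m + 1) D =
        ∑ p ∈ range D, polyLen D m p + polyLen D (m + 1) 0 := by
      rw [← sum_range_succ, sum_range_succ']
      simp only [polyLen_succ_succ]
    rw [polyLen_self hD, ih] at shift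
    push_cast
    linarith

theorem SuffLenCond.pos {C D mh mv : ℕ} (h : SuffLenCond C D mh mv) : 0 < D :=
  Nat.pos_of_ne_zero fun hD => by simp [SuffLenCond, hD] at h

theorem SuffLenCond.sub_le_mul_div {C D mh mv : ℕ} (h : SuffLenCond C D mh mv) :
    (mh : ℤ) - D ≤ ((C : ℤ) - D) * (mv / D : ℕ) := by
  have hD := h.pos
  obtain ⟨hn, hsum⟩ := h
  have hn' : (0 : ℚ) < (mv / D : ℕ) := by exact_mod_cast hn
  have hterm (p : ℕ) : polyLen D mh p - 1 ≤
      ⌈((polyLen D mh p : ℚ) - 1) / (mv / D : ℕ)⌉ * ((mv / D : ℕ) : ℤ) := by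
    rw [← Int.cast_le (R := ℚ), Int.cast_mul, Int.cast_natCast, Int.cast_sub, Int.cast_one]
    exact (div_le_iff₀ hn').1 (Int.le_ceil _)
  have hmul : ∑ p ∈ range D, (polyLen D mh p - 1) ≤ ((C : ℤ) - D) * (mv / D : ℕ) :=
    calc ∑ p ∈ range D, (polyLen D mh p - 1)
        ≤ ∑ p ∈ range D, ⌈((polyLen D mh p : ℚ) - 1) / (mv / D : ℕ)⌉ * ((mv / D : ℕ) : ℤ) :=
          sum_le_sum fun p _ => hterm p
      _ = (∑ p ∈ range D, ⌈((polyLen D mh p : ℚ) - 1) / (mv / D : ℕ)⌉) * ((mv / D : ℕ) : ℤ) :=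
          (sum_mul ..).symm
      _ ≤ ((C : ℤ) - D) * (mv / D : ℕ) := mul_le_mul_of_nonneg_right hsum (by positivity)
  simpa [sum_sub_distrib, sum_polyLen hD] using hmul

theorem mvC_le_mul_iff {C D mh : ℕ} {n : ℤ} (hD : 0 < D) (hC : D < C) :
    mvC C D mh ≤ D * n ↔ (mh : ℤ) - D ≤ ((C : ℤ) - D) * n := by
  have hden : (0 : ℚ) < (C : ℚ) - D := sub_pos.2 (by exact_mod_cast hC)
  rw [mvC, mul_le_mul_iff_right₀ (by exact_mod_cast hD), Int.ceil_le, div_le_iff₀' hden]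
  norm_cast

theorem SuffLenCond.mvC_le {C D mh mv : ℕ} (hC : D < C) (h : SuffLenCond C D mh mv) :
    mvC C D mh ≤ mv :=
  calc mvC C D mh ≤ D * (mv / D : ℕ) := (mvC_le_mul_iff h.pos hC).2 h.sub_le_mul_div
    _ ≤ mv := by exact_mod_cast Nat.mul_div_le mv D

theorem exists_mvC_eq_mul {C D mh : ℕ} (hC : D < C) (hmh : D < mh) :
    ∃ N : ℕ, 0 < N ∧ mvC C D mh = ↑(D * N) := by
  have hpos : 0 < ⌈((mh : ℚ) - D) / ((C : ℚ) - D)⌉ :=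
    Int.ceil_pos.2 (div_pos (sub_pos.2 (by exact_mod_cast hmh)) (sub_pos.2 (by exact_mod_cast hC)))
  obtain ⟨N, hN⟩ := Int.eq_ofNat_of_zero_le hpos.le
  exact ⟨N, by omega, by rw [mvC, hN, Nat.cast_mul]⟩

theorem suffLenCond_mul_of_le {k D mh N : ℕ} (hD : 0 < D) (hN : 0 < N)
    (h : (mh : ℤ) - D ≤ (((k * D : ℕ) : ℤ) - D) * N) : SuffLenCond (k * D) D mh (D * N) := by
  rw [SuffLenCond, Nat.mul_div_cancel_left _ hD]
  have hpoly (p : ℕ) : polyLen D mh p ≤ ((k : ℤ) - 1) * N + 1 := by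
    rw [polyLen_le_iff hD]
    push_cast at h
    linarith [Int.natCast_nonneg p]
  have hceil (p : ℕ) : ⌈((polyLen D mh p : ℚ) - 1) / N⌉ ≤ (k : ℤ) - 1 := by
    rw [Int.ceil_le, div_le_iff₀ (by exact_mod_cast hN)]
    exact_mod_cast sub_le_iff_le_add.2 (hpoly p)
  refine ⟨hN, ?_⟩
  calc ∑ p ∈ range D, ⌈((polyLen D mh p : ℚ) - 1) / N⌉
      ≤ ∑ _p ∈ range D, ((k : ℤ) - 1) := sum_le_sum fun p _ => hceil p
    _ = ((k * D : ℕ) : ℤ) - D := by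
      rw [sum_const, card_range, nsmul_eq_mul]
      push_cast
      ring

/-- Lemma 8, part (i): if `C = k·D` with `k ≥ 2` and `m_h > D`, then the sufficient
length equals the counting length `D·⌈(m_h - D)/(C - D)⌉`. -/
theorem suff_eq_counting_of_integer_oversampling (D k mh : ℕ) (hD : 0 < D) (hk : 2 ≤ k)
    (hmh : D < mh) :
    ((mvS (k * D) D mh : ℕ) : ℤ) = mvC (k * D) D mh ∧
    mvC (k * D) D mh
      = (D : ℤ) * ⌈((mh : ℚ) - (D : ℚ)) / (((k * D : ℕ) : ℚ) - (D : ℚ))⌉ := by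
  refine ⟨?_, rfl⟩
  have hC : D < k * D := lt_mul_of_one_lt_left hD hk
  obtain ⟨N, hN, hmvC⟩ := exists_mvC_eq_mul hC hmh
  have hleast : IsLeast {mv : ℕ | SuffLenCond (k * D) D mh mv} (D * N) := by
    refine ⟨suffLenCond_mul_of_le hD hN ?_, fun mv hmv => ?_⟩
    · exact (mvC_le_mul_iff hD hC).1 (by rw [hmvC, Nat.cast_mul])
    · exact_mod_cast hmvC ▸ SuffLenCond.mvC_le hC hmv
  rw [mvS, hleast.csInf_eq, hmvC]
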